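/- arXiv:0809.4192 — 4 statements merged into one kernel-verified Lean document; each statement's English description precedes it below -/
import Mathlib

section
/- Let Φ : X → B be a fibration of categories, and let J be an object of B. Then the inclusion functor i_J : X_J → X of the fiber over J preserves colimits of diagrams indexed by small connected categories. That is, if C is a small connected category, T : C → X_J is a functor, and γ : T ⇒ L is a colimit cocone in X_J, then i_J γ : i_J ∘ T ⇒ i_J(L) is a colimit cocone in X. -/
/-! Let `s` be a cocone in `𝒳` under a diagram `T` in the fiber over `J`. The legs of `s` lie over
morphisms `J ⟶ Φ.obj s.pt` that agree along every arrow of `C`, hence all agree with a single `u`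
because `C` is connected (`exists_common_base`). For a cartesian lift `φ : Y ⟶ s.pt` of `u`,
morphisms into `s.pt` over `u` from an object of the fiber correspond, by composition with `φ`,
to morphisms of the fiber into `Y` (`exists_fiber_factor`, `fiber_factor_unique`). Thus `s`
becomes a cocone in the fiber with point `Y`, and its factorization through the colimit of the
fiber composes with `φ` to the desired map. For uniqueness, any factorization of `s` through the
colimit lies over `u`, since `C` is nonempty and the colimit legs are vertical; so it comes from a
morphism of the fiber. -/

open CategoryTheory CategoryTheory.Functor CategoryTheory.Limits

universe w v₁ v₂ u₁ u₂

variable {𝒳 : Type u₁} {𝒮 : Type u₂} [Category.{v₁} 𝒳] [Category.{v₂} 𝒮]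

/-- A morphism `φ : Y ⟶ X` in `𝒳` lying over `u := Φ.map φ` is *cartesian* (with respect to `Φ`)
if for every morphism `v : K ⟶ J` in the base and every `θ : Z ⟶ X` with
`Φ.map θ = v ≫ Φ.map φ` there is a unique `ψ : Z ⟶ Y` with `Φ.map ψ = v` and `θ = ψ ≫ φ`. -/
def IsCartesianMor (Φ : 𝒳 ⥤ 𝒮) {Y X : 𝒳} (φ : Y ⟶ X) : Prop :=
  ∀ ⦃Z : 𝒳⦄ (θ : Z ⟶ X) (v : Φ.obj Z ⟶ Φ.obj Y),
    Φ.map θ = v ≫ Φ.map φ → ∃! ψ : Z ⟶ Y, Φ.map ψ = v ∧ θ = ψ ≫ φ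

/-- `Φ` is a *fibration* if every object `X` admits a cartesian lifting along every morphism
`u : J ⟶ Φ.obj X` of the base. -/
def IsFibrationMor (Φ : 𝒳 ⥤ 𝒮) : Prop :=
  ∀ (X : 𝒳) ⦃J : 𝒮⦄ (u : J ⟶ Φ.obj X),
    ∃ (Y : 𝒳) (φ : Y ⟶ X), Φ.IsHomLift u φ ∧ IsCartesianMor Φ φ

/-- Existence half of the universal property of a cartesian lift of `u`, seen from the fiber. -/
lemma exists_fiber_factor {Φ : 𝒳 ⥤ 𝒮} {J : 𝒮} {X Y : 𝒳} {u : J ⟶ Φ.obj X} {φ : Y ⟶ X}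
    (hu : Φ.IsHomLift u φ) (hφ : IsCartesianMor Φ φ) (hY : Φ.obj Y = J) (A : Φ.Fiber J)
    (θ : A.1 ⟶ X) (hθ : Φ.IsHomLift u θ) :
    ∃ ψ : A ⟶ (⟨Y, hY⟩ : Φ.Fiber J), ψ.1 ≫ φ = θ := by
  obtain ⟨A, hA⟩ := A
  obtain ⟨ψ, ⟨h1, h2⟩, -⟩ := hφ θ (eqToHom (hA.trans hY.symm)) (by
    rw [IsHomLift.fac' Φ u θ, IsHomLift.fac' Φ u φ]; simp)
  exact ⟨⟨ψ, IsHomLift.of_fac' _ _ _ hA hY (by simp [h1])⟩, h2.symm⟩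

/-- Uniqueness half of the universal property of a cartesian morphism, seen from the fiber. -/
lemma fiber_factor_unique {Φ : 𝒳 ⥤ 𝒮} {J : 𝒮} {X Y : 𝒳} {φ : Y ⟶ X}
    (hφ : IsCartesianMor Φ φ) (hY : Φ.obj Y = J) (A : Φ.Fiber J)
    (ψ ψ' : A ⟶ (⟨Y, hY⟩ : Φ.Fiber J)) (h : ψ.1 ≫ φ = ψ'.1 ≫ φ) : ψ = ψ' := by
  have e : Φ.map ψ.1 = Φ.map ψ'.1 := by
    have := ψ.2
    have := ψ'.2
    rw [IsHomLift.fac' Φ (𝟙 J) ψ.1, IsHomLift.fac' Φ (𝟙 J) ψ'.1]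
  exact Subtype.ext ((hφ (ψ.1 ≫ φ) (Φ.map ψ.1) (by simp)).unique ⟨rfl, rfl⟩ ⟨e.symm, h⟩)

/-- If the composite of a vertical morphism with `m` lifts `u`, then so does `m`. -/
lemma isHomLift_of_vertical_comp {Φ : 𝒳 ⥤ 𝒮} {J : 𝒮} {A B : Φ.Fiber J} (f : A ⟶ B) {X : 𝒳}
    (m : B.1 ⟶ X) (u : J ⟶ Φ.obj X) (h : Φ.IsHomLift u (f.1 ≫ m)) : Φ.IsHomLift u m := by
  have := f.2
  refine IsHomLift.of_fac _ _ _ B.2 rfl ?_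
  rw [IsHomLift.fac Φ u (f.1 ≫ m), Φ.map_comp, IsHomLift.fac' Φ (𝟙 J) f.1]
  simp

lemma base_vertical_comp {Φ : 𝒳 ⥤ 𝒮} {J : 𝒮} {A B : Φ.Fiber J} (f : A ⟶ B) {X : 𝒳}
    (m : B.1 ⟶ X) :
    eqToHom A.2.symm ≫ Φ.map (f.1 ≫ m) = eqToHom B.2.symm ≫ Φ.map m := by
  have := f.2
  rw [Φ.map_comp, IsHomLift.fac' Φ (𝟙 J) f.1]
  simp

/-- Over a connected index category, all legs of a cocone in `𝒳` under a diagram in the fiber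
over `J` lift the same base morphism. -/
lemma exists_common_base (Φ : 𝒳 ⥤ 𝒮) {J : 𝒮} {C : Type w} [SmallCategory C] [IsConnected C]
    (T : C ⥤ Φ.Fiber J) (s : Cocone (T ⋙ (Fiber.fiberInclusion : Φ.Fiber J ⥤ 𝒳))) :
    ∃ u : J ⟶ Φ.obj s.pt, ∀ j, Φ.IsHomLift u (s.ι.app j) := by
  let F : C → (J ⟶ Φ.obj s.pt) := fun j => eqToHom (T.obj j).2.symm ≫ Φ.map (s.ι.app j)
  have hF : ∀ i j, F i = F j := by
    refine fun i j => constant_of_preserves_morphisms F (fun a b f => ?_) i j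
    have e : (T.map f).1 ≫ s.ι.app b = s.ι.app a := s.w f
    have h := base_vertical_comp (T.map f) (s.ι.app b)
    rw [e] at h
    exact h
  obtain ⟨j₀⟩ : Nonempty C := inferInstance
  refine ⟨F j₀, fun j => IsHomLift.of_fac _ _ _ (T.obj j).2 rfl ?_⟩
  rw [hF j₀ j]
  exact congrArg _ (Category.comp_id _).symm

/-- for a fibration `Φ : 𝒳 ⥤ 𝒮` and `J : 𝒮`, the inclusion of the fiber over `J`
into `𝒳` preserves colimits of diagrams indexed by small connected categories: the image under
the fiber inclusion of any colimit cocone on a diagram `T : C ⥤ 𝒳_J` is a colimit cocone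
in `𝒳`. -/
theorem stmt_5 (Φ : 𝒳 ⥤ 𝒮) (hΦ : IsFibrationMor Φ) (J : 𝒮)
    (C : Type w) [SmallCategory C] [IsConnected C]
    (T : C ⥤ Φ.Fiber J) (c : Cocone T) (hc : IsColimit c) :
    Nonempty (IsColimit ((Fiber.fiberInclusion : Φ.Fiber J ⥤ 𝒳).mapCocone c)) := by
  have key : ∀ s : Cocone (T ⋙ (Fiber.fiberInclusion : Φ.Fiber J ⥤ 𝒳)),
      ∃! m : c.pt.1 ⟶ s.pt, ∀ j, (c.ι.app j).1 ≫ m = s.ι.app j := by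
    intro s
    obtain ⟨u, hu⟩ := exists_common_base Φ T s
    obtain ⟨Y, φ, hl, hφ⟩ := hΦ s.pt u
    have hY : Φ.obj Y = J := IsHomLift.domain_eq Φ u φ
    choose ψ hψ using fun j => exists_fiber_factor hl hφ hY (T.obj j) (s.ι.app j) (hu j)
    let t : Cocone T :=
      { pt := ⟨Y, hY⟩
        ι :=
          { app := ψ
            naturality := fun a b f => by
              refine fiber_factor_unique hφ hY _ _ _ ?_
              change ((T.map f).1 ≫ (ψ b).1) ≫ φ = ((ψ a).1 ≫ 𝟙 Y) ≫ φ
              rw [Category.assoc, hψ, Category.comp_id, hψ]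
              exact s.w f } }
    have ht : ∀ j, (c.ι.app j).1 ≫ (hc.desc t).1 = (ψ j).1 := fun j =>
      congrArg Subtype.val (hc.fac t j)
    refine ⟨(hc.desc t).1 ≫ φ, fun j => ?_, fun m hm => ?_⟩
    · change (c.ι.app j).1 ≫ (hc.desc t).1 ≫ φ = _
      rw [← Category.assoc, ht, hψ]
    · obtain ⟨j₀⟩ : Nonempty C := inferInstance
      have hm' : Φ.IsHomLift u m :=
        isHomLift_of_vertical_comp (c.ι.app j₀) m u (by rw [hm j₀]; exact hu j₀)
      obtain ⟨χ, hχ⟩ := exists_fiber_factor hl hφ hY c.pt m hm'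
      have : χ = hc.desc t := hc.uniq t χ fun j => by
        refine fiber_factor_unique hφ hY _ _ _ ?_
        change ((c.ι.app j).1 ≫ χ.1) ≫ φ = (ψ j).1 ≫ φ
        rw [Category.assoc, hχ, hψ]
        exact hm j
      rw [← hχ, this]
  choose d hd hd' using key
  exact ⟨{ desc := d, fac := hd, uniq := hd' }⟩
end

section
/- Let Φ : X → B be a cofibration of categories, and let J be an object of B. Then the inclusion functor X_J → X of the fiber over J preserves limits of diagrams indexed by small connected categories. -/
/-!
Given a cone `s` in `𝒳` over a diagram `T` in the fiber over `J`, the legs of `s` all lie over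
morphisms `Φ(s.pt) ⟶ J`; since the transition maps of `T` lie over `𝟙 J` and the index category is
connected, these are one and the same morphism `v` (`cone_base_constant`). Take a cocartesian
lifting `ψ : s.pt ⟶ Y` of `v`. Morphisms `s.pt ⟶ x` over `v`, with `x` in the fiber, correspond
bijectively to morphisms `Y ⟶ x` in the fiber by composition with `ψ`
(`IsCocartesianMor.existsUnique_fiber`). Thus `s` factors through a cone with vertex `Y` in the
fiber, and the universal property of the limit in the fiber gives the one in `𝒳`. Nonemptiness of
the index category is what forces a mediating morphism in `𝒳` to lie over `v`.
-/

open CategoryTheory CategoryTheory.Functor CategoryTheory.Limits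

universe w v₁ v₂ u₁ u₂

variable {𝒳 : Type u₁} {𝒮 : Type u₂} [Category.{v₁} 𝒳] [Category.{v₂} 𝒮]

/-- A morphism `ψ : Z ⟶ Y` in `𝒳` lying over `v := Φ.map ψ` is *cocartesian* (with respect to
`Φ`) if for every morphism `u : J ⟶ I` in the base and every `θ : Z ⟶ X` with
`Φ.map θ = Φ.map ψ ≫ u` there is a unique `φ : Y ⟶ X` with `Φ.map φ = u` and `θ = ψ ≫ φ`. -/
def IsCocartesianMor (Φ : 𝒳 ⥤ 𝒮) {Z Y : 𝒳} (ψ : Z ⟶ Y) : Prop :=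
  ∀ ⦃X : 𝒳⦄ (θ : Z ⟶ X) (u : Φ.obj Y ⟶ Φ.obj X),
    Φ.map θ = Φ.map ψ ≫ u → ∃! φ : Y ⟶ X, Φ.map φ = u ∧ θ = ψ ≫ φ

/-- `Φ` is a *cofibration* if every object `Z` admits a cocartesian lifting along every morphism
`v : Φ.obj Z ⟶ J` of the base. -/
def IsCofibrationMor (Φ : 𝒳 ⥤ 𝒮) : Prop :=
  ∀ (Z : 𝒳) ⦃J : 𝒮⦄ (v : Φ.obj Z ⟶ J),
    ∃ (Y : 𝒳) (ψ : Z ⟶ Y), Φ.IsHomLift v ψ ∧ IsCocartesianMor Φ ψ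

/-- Morphisms over `v : Φ(Z) ⟶ J` from `Z` to an object of the fiber over `J` factor uniquely
through a cocartesian lifting of `v`, by a morphism of the fiber. -/
lemma IsCocartesianMor.existsUnique_fiber {Φ : 𝒳 ⥤ 𝒮} {J : 𝒮} {Z Y : 𝒳} {ψ : Z ⟶ Y}
    (hψ : IsCocartesianMor Φ ψ) (hY : Φ.obj Y = J) (x : Φ.Fiber J) (θ : Z ⟶ x.1)
    (h : Φ.map θ ≫ eqToHom x.2 = Φ.map ψ ≫ eqToHom hY) :
    ∃! f : (Fiber.mk hY : Φ.Fiber J) ⟶ x, ψ ≫ Fiber.fiberInclusion.map f = θ := by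
  obtain ⟨x, rfl⟩ := x
  obtain ⟨φ, ⟨h₁, h₂⟩, h₃⟩ := hψ θ (eqToHom hY) (by simpa using h)
  refine ⟨⟨φ, IsHomLift.of_fac' _ _ _ hY rfl (h₁.trans (by simp; rfl))⟩, h₂.symm, ?_⟩
  intro g hg
  apply Fiber.hom_ext
  refine h₃ _ ⟨?_, hg.symm⟩
  have := g.2
  exact (IsHomLift.fac' Φ (𝟙 (Φ.obj x)) g.1).trans (by simp; rfl)

lemma fiber_map_eq {Φ : 𝒳 ⥤ 𝒮} {J : 𝒮} {x y : Φ.Fiber J} (f : x ⟶ y) :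
    Φ.map (Fiber.fiberInclusion.map f) ≫ eqToHom y.2 = eqToHom x.2 := by
  have := f.2
  exact (IsHomLift.commSq Φ (𝟙 J) f.1).w.trans (Category.comp_id _)

lemma comp_fiberInclusion_map {Φ : 𝒳 ⥤ 𝒮} {J : 𝒮} {Z : 𝒳} {y x x' : Φ.Fiber J} (ψ : Z ⟶ y.1)
    (f : y ⟶ x) (g : x ⟶ x') :
    ψ ≫ Fiber.fiberInclusion.map (f ≫ g) =
      (ψ ≫ Fiber.fiberInclusion.map f) ≫ Fiber.fiberInclusion.map g :=
  (Category.assoc ψ f.1 g.1).symm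

/-- All legs of a cone in `𝒳` over a connected diagram in a fiber lie over the same morphism. -/
lemma cone_base_constant {Φ : 𝒳 ⥤ 𝒮} {J : 𝒮} {C : Type w} [SmallCategory C] [IsConnected C]
    (T : C ⥤ Φ.Fiber J) (s : Cone (T ⋙ (Fiber.fiberInclusion : Φ.Fiber J ⥤ 𝒳))) (i j : C) :
    Φ.map (s.π.app i) ≫ eqToHom (T.obj i).2 = Φ.map (s.π.app j) ≫ eqToHom (T.obj j).2 := by
  refine constant_of_preserves_morphisms
    (fun i : C => (Φ.map (s.π.app i) ≫ eqToHom (T.obj i).2 : Φ.obj s.pt ⟶ J)) ?_ i j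
  intro i j f
  have h : s.π.app j = s.π.app i ≫ Fiber.fiberInclusion.map (T.map f) := (s.w f).symm
  have h' := fiber_map_eq (T.map f)
  change Φ.map (s.π.app i) ≫ eqToHom (T.obj i).2 = Φ.map (s.π.app j) ≫ eqToHom (T.obj j).2
  rw [h, Φ.map_comp, Category.assoc]
  exact congrArg _ h'.symm

/-- for a cofibration `Φ : 𝒳 ⥤ 𝒮` and `J : 𝒮`, the inclusion of the fiber over
`J` into `𝒳` preserves limits of diagrams indexed by small connected categories: the image
under the fiber inclusion of any limit cone on a diagram `T : C ⥤ 𝒳_J` is a limit cone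
in `𝒳`. -/
theorem stmt_9 (Φ : 𝒳 ⥤ 𝒮) (hΦ : IsCofibrationMor Φ) (J : 𝒮)
    (C : Type w) [SmallCategory C] [IsConnected C]
    (T : C ⥤ Φ.Fiber J) (c : Cone T) (hc : IsLimit c) :
    Nonempty (IsLimit ((Fiber.fiberInclusion : Φ.Fiber J ⥤ 𝒳).mapCone c)) := by
  refine ⟨IsLimit.ofExistsUnique fun s => ?_⟩
  let i₀ : C := Classical.arbitrary C
  obtain ⟨Y, ψ, hv, hψ⟩ := hΦ s.pt (Φ.map (s.π.app i₀) ≫ eqToHom (T.obj i₀).2)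
  have hY : Φ.obj Y = J :=
    IsHomLift.codomain_eq Φ (Φ.map (s.π.app i₀) ≫ eqToHom (T.obj i₀).2) ψ
  have hψv : Φ.map ψ ≫ eqToHom hY = Φ.map (s.π.app i₀) ≫ eqToHom (T.obj i₀).2 := by
    rw [IsHomLift.fac' Φ (Φ.map (s.π.app i₀) ≫ eqToHom (T.obj i₀).2) ψ]
    simp
  have key := fun i => hψ.existsUnique_fiber hY (T.obj i) (s.π.app i)
    ((cone_base_constant T s i i₀).trans hψv.symm)
  choose f hf hf' using key
  -- The cone in the fiber through which `s` factors along `ψ`.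
  let t : Cone T :=
    { pt := Fiber.mk hY
      π :=
        { app := f
          naturality := fun i j u => by
            refine (Category.id_comp _).trans (hf' j (f i ≫ T.map u) ?_).symm
            exact (comp_fiberInclusion_map ψ (f i) (T.map u)).trans
              ((congrArg (· ≫ Fiber.fiberInclusion.map (T.map u)) (hf i)).trans (s.w u)) } }
  refine ⟨ψ ≫ Fiber.fiberInclusion.map (hc.lift t), fun i => ?_, fun m hm => ?_⟩
  · exact (comp_fiberInclusion_map (y := t.pt) ψ (hc.lift t) (c.π.app i)).symm.trans
      ((congrArg (fun k : t.pt ⟶ T.obj i => (ψ ≫ k.1 : s.pt ⟶ (T.obj i).1)) (hc.fac t i)).trans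
        (hf i))
  · have hm' : ∀ i, m ≫ Fiber.fiberInclusion.map (c.π.app i) = s.π.app i := hm
    -- The legs of `c` lie over `𝟙 J`, so `m` lies over the same morphism as `s.π.app i₀`.
    have hmv : Φ.map m ≫ eqToHom c.pt.2 = Φ.map ψ ≫ eqToHom hY := by
      rw [hψv, ← hm' i₀, Φ.map_comp, Category.assoc]
      exact congrArg _ (fiber_map_eq (c.π.app i₀)).symm
    obtain ⟨g, hg, -⟩ := hψ.existsUnique_fiber hY c.pt m hmv
    have hgt : g = hc.lift t := hc.uniq t g fun i => hf' i (g ≫ c.π.app i)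
      ((comp_fiberInclusion_map ψ g (c.π.app i)).trans
        ((congrArg (· ≫ Fiber.fiberInclusion.map (c.π.app i)) hg).trans (hm' i)))
    rw [← hgt]
    exact hg.symm
end

section
/- Let Φ : X → B be a fibration of categories which has a left adjoint D : B → X, and suppose that X admits pushouts. Let v : K → J be a morphism in B and let Z be an object of the fiber X_K. Then a morphism ψ : Z → Y in X with Φ(ψ) = v is cocartesian if and only if the square with vertices D(K), D(J), Z, Y — with top edge D(v) : D(K) → D(J), left edge the unique morphism ε_K : D(K) → Z over id_K, right edge the unique morphism ε_J : D(J) → Y over id_J, and bottom edge ψ — is a pushout square in X. -/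
/-!
A morphism `D(Φ Z) ⟶ Z` over the identity is the counit of `D ⊣ Φ` at `Z`, because the unit is the
canonical identification. So the square in question is the naturality square of the counit at `ψ`.
By adjunction, a cocone `(a : D(Φ Y) ⟶ X, b : Z ⟶ X)` on its span is the same as a pair
`(u : Φ Y ⟶ Φ X, b)` with `Φ b = Φ ψ ≫ u`, and a morphism `φ : Y ⟶ X` restricts to `a` along the
counit exactly when `Φ φ = u`. Hence the universal property of the pushout is literally the
cocartesian property of `ψ`. This is `isCocartesianMor_iff_isPushout_counit`.
-/

open CategoryTheory CategoryTheory.Functor CategoryTheory.Limits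

universe v₁ v₂ u₁ u₂

variable {𝒳 : Type u₁} {𝒮 : Type u₂} [Category.{v₁} 𝒳] [Category.{v₂} 𝒮]

/-- The restriction of `φ` along the counit and the morphism `Φ φ` are adjoint transposes. -/
lemma counit_comp_eq_iff {Φ : 𝒳 ⥤ 𝒮} {D : 𝒮 ⥤ 𝒳} (adj : D ⊣ Φ) {Y X : 𝒳} (φ : Y ⟶ X)
    (a : D.obj (Φ.obj Y) ⟶ X) :
    adj.counit.app Y ≫ φ = a ↔ Φ.map φ = adj.homEquiv _ _ a := by
  rw [← Equiv.symm_apply_eq, adj.homEquiv_counit, adj.counit_naturality]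

lemma isCocartesianMor_iff_isPushout_counit {Φ : 𝒳 ⥤ 𝒮} {D : 𝒮 ⥤ 𝒳} (adj : D ⊣ Φ)
    {Z Y : 𝒳} (ψ : Z ⟶ Y) :
    IsCocartesianMor Φ ψ ↔
      IsPushout (D.map (Φ.map ψ)) (adj.counit.app Z) (adj.counit.app Y) ψ := by
  -- Compatibility with the span, transposed to the base.
  have key : ∀ {X : 𝒳} (a : D.obj (Φ.obj Y) ⟶ X) (b : Z ⟶ X),
      D.map (Φ.map ψ) ≫ a = adj.counit.app Z ≫ b ↔
        Φ.map b = Φ.map ψ ≫ adj.homEquiv _ _ a := by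
    intro X a b
    rw [eq_comm, counit_comp_eq_iff, adj.homEquiv_naturality_left]
  constructor
  · intro h
    refine ⟨⟨adj.counit_naturality ψ⟩, ⟨PushoutCocone.IsColimit.mk _
      (fun s => (h s.inr _ ((key s.inl s.inr).1 s.condition)).choose) ?_ ?_ ?_⟩⟩
    · intro s
      exact (counit_comp_eq_iff adj _ _).2
        (h s.inr _ ((key s.inl s.inr).1 s.condition)).choose_spec.1.1
    · intro s
      exact (h s.inr _ ((key s.inl s.inr).1 s.condition)).choose_spec.1.2.symm
    · intro s m h₁ h₂
      exact (h s.inr _ ((key s.inl s.inr).1 s.condition)).choose_spec.2 m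
        ⟨(counit_comp_eq_iff adj _ _).1 h₁, h₂.symm⟩
  · intro h X θ u hu
    have w : D.map (Φ.map ψ) ≫ (adj.homEquiv _ _).symm u = adj.counit.app Z ≫ θ := by
      rw [key, Equiv.apply_symm_apply, hu]
    refine ⟨h.desc _ _ w, ⟨?_, (h.inr_desc _ _ w).symm⟩, ?_⟩
    · simpa using (counit_comp_eq_iff adj _ _).1 (h.inl_desc _ _ w)
    · rintro φ ⟨h₁, h₂⟩
      apply h.hom_ext
      · rw [h.inl_desc, counit_comp_eq_iff, Equiv.apply_symm_apply, h₁]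
      · rw [h.inr_desc, ← h₂]

lemma eq_counit_of_isHomLift_id {Φ : 𝒳 ⥤ 𝒮} {D : 𝒮 ⥤ 𝒳} (adj : D ⊣ Φ)
    (hobj : ∀ K : 𝒮, Φ.obj (D.obj K) = K)
    (hunit : ∀ K : 𝒮, adj.unit.app K = eqToHom (hobj K).symm)
    {Z : 𝒳} (ε : D.obj (Φ.obj Z) ⟶ Z) (hε : Φ.IsHomLift (𝟙 (Φ.obj Z)) ε) :
    ε = adj.counit.app Z := by
  apply (adj.homEquiv _ _).injective
  have h := IsHomLift.fac' Φ (𝟙 (Φ.obj Z)) ε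
  rw [adj.homEquiv_unit, adj.homEquiv_unit, adj.right_triangle_components, hunit, h]
  simp

/-- let `Φ : 𝒳 ⥤ 𝒮` be a fibration with left adjoint `D` (with `Φ(D K) = K` and
identity-like unit) and suppose `𝒳` admits pushouts.  Let `v : K ⟶ J` in `𝒮`, let `Z` lie in
the fiber over `K`, and let `ψ : Z ⟶ Y` lie over `v`.  Let `ε_K : D(K) ⟶ Z` be the (unique)
morphism over `𝟙 K` and `ε_J : D(J) ⟶ Y` the (unique) morphism over `𝟙 J`.  Then `ψ` is
cocartesian if and only if the square with top `D(v)`, left `ε_K`, right `ε_J` and bottom `ψ`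
is a pushout square in `𝒳`. -/
theorem stmt_15 (Φ : 𝒳 ⥤ 𝒮) (hΦ : IsFibrationMor Φ) (D : 𝒮 ⥤ 𝒳) (adj : D ⊣ Φ)
    (hobj : ∀ K : 𝒮, Φ.obj (D.obj K) = K)
    (hunit : ∀ K : 𝒮, adj.unit.app K = eqToHom (hobj K).symm)
    [HasPushouts 𝒳]
    {K J : 𝒮} (v : K ⟶ J) {Z Y : 𝒳} (hZ : Φ.obj Z = K)
    (ψ : Z ⟶ Y) (hψ : Φ.IsHomLift v ψ)
    (εK : D.obj K ⟶ Z) (hεK : Φ.IsHomLift (𝟙 K) εK)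
    (εJ : D.obj J ⟶ Y) (hεJ : Φ.IsHomLift (𝟙 J) εJ) :
    IsCocartesianMor Φ ψ ↔ IsPushout (D.map v) εK εJ ψ := by
  subst hZ
  obtain rfl : Φ.obj Y = J := IsHomLift.codomain_eq Φ v ψ
  obtain rfl : v = Φ.map ψ := by
    simpa using IsHomLift.fac Φ v ψ
  rw [eq_counit_of_isHomLift_id adj hobj hunit εK hεK,
    eq_counit_of_isHomLift_id adj hobj hunit εJ hεJ]
  exact isCocartesianMor_iff_isPushout_counit adj ψ
end

section
/- Let Φ : X → B be a fibration of categories which has a left adjoint, and suppose that X admits pushouts. Then Φ is also a cofibration of categories. -/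
/-!
Given `Z` and `v : Φ Z ⟶ J`, let `P` be the pushout of the counit `D (Φ Z) ⟶ Z` along
`D v : D (Φ Z) ⟶ D J`. By adjunction, `P` comes with `ψ : Z ⟶ P` and `k : J ⟶ Φ P` such that maps
`P ⟶ X` correspond to pairs `(θ : Z ⟶ X, u : J ⟶ Φ X)` with `Φ θ = v ≫ u`
(`exists_universal_pair`). Thus `ψ` has the universal property of a cocartesian lift of `v`, except
that `P` need not lie over `J`. The cartesian lift `c : Y ⟶ P` of `k` repairs this: `ψ` factors as
`χ ≫ c` with `χ` over `v`, and the pair `(χ, 𝟙 J)` induces `r : P ⟶ Y`. The universal property of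
`P` gives `r ≫ c = 𝟙 P` and cartesianness of `c` gives `c ≫ r = 𝟙 Y`, so the universal property of
`P` transports to `Y`, and `χ` is cocartesian.
-/

open CategoryTheory CategoryTheory.Functor CategoryTheory.Limits

universe v₁ v₂ u₁ u₂

variable {𝒳 : Type u₁} {𝒮 : Type u₂} [Category.{v₁} 𝒳] [Category.{v₂} 𝒮]

/-- The universal pair `(ψ, k)` carried by the pushout of the counit at `Z` along `D v`. -/
theorem exists_universal_pair (Φ : 𝒳 ⥤ 𝒮) (D : 𝒮 ⥤ 𝒳) (adj : D ⊣ Φ) [HasPushouts 𝒳]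
    (Z : 𝒳) {J : 𝒮} (v : Φ.obj Z ⟶ J) :
    ∃ (P : 𝒳) (ψ : Z ⟶ P) (k : J ⟶ Φ.obj P), Φ.map ψ = v ≫ k ∧
      ∀ (X : 𝒳) (θ : Z ⟶ X) (u : J ⟶ Φ.obj X), Φ.map θ = v ≫ u →
        ∃! h : P ⟶ X, ψ ≫ h = θ ∧ k ≫ Φ.map h = u := by
  -- Commutativity of a square under the span is the transpose of the condition `Φ θ = v ≫ u`.
  have key : ∀ {X : 𝒳} (θ : Z ⟶ X) (g : D.obj J ⟶ X),
      adj.counit.app Z ≫ θ = D.map v ≫ g ↔ Φ.map θ = v ≫ adj.homEquiv _ _ g := by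
    intro X θ g
    rw [← (adj.homEquiv _ _).apply_eq_iff_eq, adj.homEquiv_naturality_left,
      adj.homEquiv_naturality_right]
    simp [Adjunction.homEquiv_unit]
  refine ⟨pushout (adj.counit.app Z) (D.map v), pushout.inl _ _,
    adj.homEquiv _ _ (pushout.inr _ _), (key _ _).1 pushout.condition, ?_⟩
  intro X θ u hu
  have hsq : adj.counit.app Z ≫ θ = D.map v ≫ (adj.homEquiv _ _).symm u :=
    (key _ _).2 (by simpa using hu)
  refine ⟨pushout.desc θ ((adj.homEquiv _ _).symm u) hsq, ⟨pushout.inl_desc _ _ _, ?_⟩, ?_⟩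
  · rw [← adj.homEquiv_naturality_right, pushout.inr_desc, Equiv.apply_symm_apply]
  · rintro h ⟨h1, h2⟩
    apply pushout.hom_ext
    · rw [h1, pushout.inl_desc]
    · rw [pushout.inr_desc, Equiv.eq_symm_apply, adj.homEquiv_naturality_right, h2]

/-- a fibration `Φ : 𝒳 ⥤ 𝒮` with a left adjoint `D` (with `Φ(D K) = K` and
identity-like unit) such that `𝒳` admits pushouts is also a cofibration. -/
theorem stmt_16 (Φ : 𝒳 ⥤ 𝒮) (hΦ : IsFibrationMor Φ) (D : 𝒮 ⥤ 𝒳) (adj : D ⊣ Φ)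
    (hobj : ∀ K : 𝒮, Φ.obj (D.obj K) = K)
    (hunit : ∀ K : 𝒮, adj.unit.app K = eqToHom (hobj K).symm)
    [HasPushouts 𝒳] :
    IsCofibrationMor Φ := by
  intro Z J v
  obtain ⟨P, ψ, k, hψ, univ⟩ := exists_universal_pair Φ D adj Z v
  obtain ⟨Y, c, hlift, hc⟩ := hΦ P k
  -- `Y` lies over `J` only up to an equality of objects, carried along as the isomorphism `e`.
  have hY : Φ.obj Y = J := IsHomLift.domain_eq Φ k c
  obtain ⟨e, he⟩ : ∃ e : Φ.obj Y ≅ J, e = eqToIso hY := ⟨_, rfl⟩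
  have hck : Φ.map c = e.hom ≫ k := by
    have := IsHomLift.fac' Φ k c
    simpa [he] using this
  obtain ⟨χ, ⟨hχv, hχc⟩, -⟩ := hc ψ (v ≫ e.inv) (by simp [hck, hψ])
  obtain ⟨r, ⟨hr1, hr2⟩, -⟩ := univ Y χ e.inv hχv
  have hrc : r ≫ c = 𝟙 P :=
    (univ P ψ k hψ).unique
      ⟨by rw [← Category.assoc, hr1, ← hχc],
        by rw [Φ.map_comp, ← Category.assoc, hr2, hck, Iso.inv_hom_id_assoc]⟩
      ⟨Category.comp_id _, by simp⟩
  have hcr : c ≫ r = 𝟙 Y :=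
    (hc c (𝟙 _) (by simp)).unique
      ⟨by rw [Φ.map_comp, hck, Category.assoc, hr2, e.hom_inv_id],
        by rw [Category.assoc, hrc, Category.comp_id]⟩
      ⟨by simp, by simp⟩
  refine ⟨Y, χ, ?_, ?_⟩
  · refine IsHomLift.of_fac' Φ v χ rfl hY ?_
    simp [hχv, he]
  · intro X θ u hu
    obtain ⟨h, ⟨hh1, hh2⟩, huniq⟩ := univ X θ (e.inv ≫ u) (by simp [hu, hχv])
    refine ⟨c ≫ h, ⟨?_, ?_⟩, ?_⟩
    · rw [Φ.map_comp, hck, Category.assoc, hh2, Iso.hom_inv_id_assoc]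
    · rw [← Category.assoc, ← hχc, hh1]
    · rintro φ ⟨hφ1, hφ2⟩
      have := huniq (r ≫ φ) ⟨by rw [← Category.assoc, hr1, hφ2],
        by rw [Φ.map_comp, ← Category.assoc, hr2, hφ1]⟩
      rw [← this, ← Category.assoc, hcr, Category.id_comp]
end
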